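/- arXiv:1705.06434 — 2 statements merged into one kernel-verified Lean document; each statement's English description precedes it below -/
import Mathlib

section
/- Let M ≥ 0, N ≥ 1, c ≥ 0 and 0 ≤ I ≤ c be integers. Then in ℤ[q] one has Σ_{i=I}^{c} q^{i(M+N)} · [N+M+c−i−1; M, N−1, c−i] = q^{I(M+N)} · [N+M−1 choose M] · [N+M+c−I choose c−I]. -/
open scoped BigOperators

noncomputable section

/-- The field ℚ(q). -/
abbrev K : Type := RatFunc ℚ

/-- The variable q. -/
def qq : K := RatFunc.X

/-- The quantum integer [n] = 1 + q + ⋯ + q^{n-1}. -/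
def qint (n : ℕ) : K := ∑ i ∈ Finset.range n, qq ^ i

/-- The quantum factorial [n]! = [1][2]⋯[n]. -/
def qfact (n : ℕ) : K := ∏ i ∈ Finset.range n, qint (i + 1)

/-- The Gaussian binomial coefficient [n choose k] = [n]!/([k]!·[n-k]!),
with the convention that it is 0 when k > n. -/
def qbinom (n k : ℕ) : K :=
  if k ≤ n then qfact n / (qfact k * qfact (n - k)) else 0

/-- The q-multinomial coefficient [k₁+⋯+k_r; k₁,…,k_r] = [k₁+⋯+k_r]!/([k₁]!⋯[k_r]!). -/
def qmultinom (ks : List ℕ) : K := qfact ks.sum / (ks.map qfact).prod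

theorem aux_qint_ne (n : ℕ) : qint (n + 1) ≠ 0 := by
  have h : qint (n + 1) = algebraMap (Polynomial ℚ) (RatFunc ℚ)
      (∑ i ∈ Finset.range (n + 1), Polynomial.X ^ i) := by
    simp [qint, qq, map_sum, map_pow, RatFunc.algebraMap_X]
  rw [h]
  intro h0
  have h1 := (map_eq_zero_iff _ (RatFunc.algebraMap_injective ℚ)).mp h0
  have h2 := congrArg (Polynomial.eval 1) h1
  simp [Polynomial.eval_finsetSum] at h2
  have h3 : ((n : ℚ) + 1) ≠ 0 := by positivity
  exact h3 h2

theorem aux_qfact_ne (n : ℕ) : qfact n ≠ 0 :=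
  Finset.prod_ne_zero_iff.mpr fun i _ => aux_qint_ne i

theorem aux_qfact_succ (n : ℕ) : qfact (n + 1) = qfact n * qint (n + 1) :=
  Finset.prod_range_succ _ _

theorem aux_qint_add (m d : ℕ) : qint (m + d) = qint m + qq ^ m * qint d := by
  simp [qint, Finset.sum_range_add, Finset.mul_sum, pow_add]

theorem aux_main (M n d : ℕ) : ∀ I : ℕ,
    ∑ i ∈ Finset.Icc I (I + d), qq ^ (i * (M + n + 1)) *
      (qfact (M + n + (I + d - i)) / (qfact M * qfact n * qfact (I + d - i)))
      = qq ^ (I * (M + n + 1)) * (qfact (M + n) / (qfact M * qfact n)) *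
        (qfact (M + n + 1 + d) / (qfact d * qfact (M + n + 1))) := by
  induction d with
  | zero =>
    intro I
    have h0 : qfact 0 = 1 := by simp [qfact]
    have := aux_qfact_ne (M + n + 1)
    simp [h0, this]
  | succ d ih =>
    intro I
    rw [← Finset.add_sum_Ioc_eq_sum_Icc (by omega : I ≤ I + (d + 1))]
    have hs : Finset.Ioc I (I + (d + 1)) = Finset.Icc (I + 1) (I + 1 + d) := by
      ext x; simp only [Finset.mem_Ioc, Finset.mem_Icc]; omega
    have e : I + (d + 1) = I + 1 + d := by omega
    rw [hs, e, ih (I + 1)]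
    have e2 : I + 1 + d - I = d + 1 := by omega
    rw [e2]
    have e3 : M + n + (d + 1) = M + n + 1 + d := by omega
    have e4 : M + n + 1 + (d + 1) = (M + n + 1 + d) + 1 := by omega
    have key := aux_qint_add (M + n + 1) (d + 1)
    rw [e4] at key
    rw [e3, e4, aux_qfact_succ (M + n + 1 + d), key, aux_qfact_succ d, aux_qfact_succ (M + n)]
    have a1 := aux_qfact_ne M
    have a2 := aux_qfact_ne n
    have a3 := aux_qfact_ne d
    have a4 := aux_qfact_ne (M + n)
    have a5 := aux_qint_ne d
    have a6 := aux_qint_ne (M + n)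
    have e5 : qq ^ ((I + 1) * (M + n + 1)) = qq ^ (I * (M + n + 1)) * qq ^ (M + n + 1) := by
      rw [← pow_add]; congr 1; ring
    rw [e5]
    generalize qq ^ (I * (M + n + 1)) = x
    generalize qq ^ (M + n + 1) = y
    generalize qint (M + n + 1) = z at *
    generalize qint (d + 1) = w at *
    field_simp

theorem stmt_1 (M N c I : ℕ) (hN : 1 ≤ N) (hI : I ≤ c) :
    ∑ i ∈ Finset.Icc I c, qq ^ (i * (M + N)) * qmultinom [M, N - 1, c - i]
      = qq ^ (I * (M + N)) * qbinom (N + M - 1) M * qbinom (N + M + c - I) (c - I) := by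
  obtain ⟨n, rfl⟩ : ∃ n, N = n + 1 := ⟨N - 1, by omega⟩
  obtain ⟨d, rfl⟩ : ∃ d, c = I + d := ⟨c - I, by omega⟩
  have h := aux_main M n d I
  have e1 : n + 1 + M - 1 = M + n := by omega
  have e2 : n + 1 + M + (I + d) - I = M + n + 1 + d := by omega
  have e3 : I + d - I = d := by omega
  rw [e1, e2, e3]
  have b1 : qbinom (M + n) M = qfact (M + n) / (qfact M * qfact n) := by
    simp [qbinom]
  have b2 : qbinom (M + n + 1 + d) d =
      qfact (M + n + 1 + d) / (qfact d * qfact (M + n + 1)) := by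
    simp [qbinom]
  rw [b1, b2, ← add_assoc M n 1, ← h]
  refine Finset.sum_congr rfl fun i _ => ?_
  simp [qmultinom, add_assoc, mul_assoc]
end
end

section
/- Let λ be a Dyck word of semilength n. For each node v of its chord forest (a node is either a chord of λ or the formal root), let c_1, …, c_k be the children of v, i.e. the maximal chords nested directly under v (for the root: the outermost chords of λ). Then P_λ = ∏_v [l(c_1)+⋯+l(c_k); l(c_1), …, l(c_k)] in ℤ[q], the product of q-multinomial coefficients taken over all nodes v. -/
/-!
Dyck words, chords, nesting, capacities and Lascoux–Schützenberger labellings.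
A step is a `Bool`: `true` = U (up), `false` = D (down).
-/

open scoped BigOperators Classical

noncomputable section

/-- The height (#U − #D) of the prefix of length `k`. -/
def heightAt (l : List Bool) (k : ℕ) : ℤ :=
  ((l.take k).count true : ℤ) - ((l.take k).count false : ℤ)

/-- `l` is a Dyck word: equally many U's and D's, and every prefix has at least
as many U's as D's. -/
def IsDyckWord (l : List Bool) : Prop :=
  l.count true = l.count false ∧
    ∀ k, (l.take k).count false ≤ (l.take k).count true

/-- `(i,j)` is a chord of `l` (0-indexed matched pair of a U at `i` and a D at `j`
under the standard parenthesis matching). -/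
def IsChord (l : List Bool) (i j : ℕ) : Prop :=
  i < j ∧ j < l.length ∧ l.getD i false = true ∧ l.getD j true = false ∧
    heightAt l (j + 1) = heightAt l i ∧
    ∀ k ∈ Finset.Icc (i + 1) j, heightAt l i < heightAt l k

/-- The finset of chords of `l`. -/
def chords (l : List Bool) : Finset (ℕ × ℕ) :=
  (Finset.range l.length ×ˢ Finset.range l.length).filter fun p => IsChord l p.1 p.2

/-- `c' = (i',j')` is nested in `c = (i,j)` iff `i < i' < j' < j`. -/
def NestedIn (c' c : ℕ × ℕ) : Prop :=
  c.1 < c'.1 ∧ c'.1 < c'.2 ∧ c'.2 < c.2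

/-- The length `l(c)` of a chord: one plus the number of chords nested in it. -/
def chordLen (l : List Bool) (c : ℕ × ℕ) : ℕ :=
  1 + ((chords l).filter fun c' => NestedIn c' c).card

/-- The capacity of a chord: the number of D's strictly before its opening position. -/
def cap (l : List Bool) (c : ℕ × ℕ) : ℕ := (l.take c.1).count false

/-- LS-labellings of `l`: functions on chords (encoded as functions on `ℕ × ℕ`
vanishing off the chords) which weakly increase under nesting and are bounded by
the capacity on leaf chords. -/
def LSLabellings (l : List Bool) : Set ((ℕ × ℕ) → ℕ) :=
  {f | (∀ c, c ∉ chords l → f c = 0) ∧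
       (∀ c ∈ chords l, ∀ c' ∈ chords l, NestedIn c' c → f c ≤ f c') ∧
       (∀ c ∈ chords l, (∀ c' ∈ chords l, ¬ NestedIn c' c) → f c ≤ cap l c)}


/-- The LS generating polynomial P_λ = Σ_f q^{Σ_c f(c)}, summed over all
LS-labellings f of λ, viewed in ℚ(q). -/
def PLSK (l : List Bool) : K :=
  ∑ᶠ f ∈ LSLabellings l, qq ^ (∑ c ∈ chords l, f c)

/-- Children of a chord `c` in the chord forest: chords nested in `c` with no
intermediate chord in between. -/
def childrenOf (l : List Bool) (c : ℕ × ℕ) : Finset (ℕ × ℕ) :=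
  (chords l).filter fun c' => NestedIn c' c ∧
    ∀ c'' ∈ chords l, ¬ (NestedIn c' c'' ∧ NestedIn c'' c)

/-- Children of the formal root: the outermost chords, nested in no chord. -/
def rootChildren (l : List Bool) : Finset (ℕ × ℕ) :=
  (chords l).filter fun c' => ∀ c'' ∈ chords l, ¬ NestedIn c' c''

/-- The q-multinomial coefficient [Σ_{c ∈ s} l(c); l(c₁),…,l(c_k)] attached to a
finite set `s` of chords. -/
def qmultiOver (l : List Bool) (s : Finset (ℕ × ℕ)) : K :=
  qfact (∑ c ∈ s, chordLen l c) / ∏ c ∈ s, qfact (chordLen l c)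

inductive DT : Type
  | nil : DT
  | node (a b : DT) : DT

namespace DT

def size : DT → ℕ
  | nil => 0
  | node a b => size a + size b + 1

def word : DT → List Bool
  | nil => []
  | node a b => true :: (word a ++ false :: word b)

def cs : ℕ → DT → Finset (ℕ × ℕ)
  | _, nil => ∅
  | s, node a b => insert (s, s + 2 * size a + 1) (cs (s+1) a ∪ cs (s + 2 * size a + 2) b)

def hook : DT → K
  | nil => 1
  | node a b => qint (size a + 1) * (hook a * hook b)

def glue (c : ℕ × ℕ) (v : ℕ) (fa fb : ℕ × ℕ → ℕ) : ℕ × ℕ → ℕ :=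
  fun x => if x = c then v else fa x + fb x

def FS : ℕ → ℕ → ℕ → DT → Finset (ℕ × ℕ → ℕ)
  | _, _, _, nil => {0}
  | lo, s, m, node a b =>
    ((Finset.Icc lo m).sigma fun v => FS v (s+1) m a ×ˢ
      FS lo (s + 2 * size a + 2) (m + size a + 1) b).image
      fun p => glue (s, s + 2 * size a + 1) p.1 p.2.1 p.2.2

def Compat (κ : ℕ → ℕ) : ℕ → ℕ → DT → Prop
  | _, _, nil => True
  | s, m, node a b => κ s = m ∧ Compat κ (s+1) m a ∧
      Compat κ (s + 2 * size a + 2) (m + size a + 1) b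

theorem length_word (t : DT) : t.word.length = 2 * t.size := by
  induction t with
  | nil => rfl
  | node a b iha ihb => simp [word, size, iha, ihb]; ring

theorem count_word (t : DT) (x : Bool) : t.word.count x = t.size := by
  induction t with
  | nil => rfl
  | node a b iha ihb => cases x <;> simp [word, size, iha, ihb] <;> omega

theorem bnd (t : DT) : ∀ s, ∀ c ∈ cs s t, s ≤ c.1 ∧ c.1 < c.2 ∧ c.2 < s + 2 * size t := by
  induction t with
  | nil => simp [cs]
  | node a b iha ihb =>
    intro s c hc
    simp only [cs, Finset.mem_insert, Finset.mem_union] at hc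
    simp only [size]
    rcases hc with rfl | hc | hc
    · simp; omega
    · have := iha _ _ hc; omega
    · have := ihb _ _ hc; omega

theorem leaf (t : DT) : ∀ s, ∀ c ∈ cs s t, c.2 = c.1 + 1 ∨
    ∃ j, (c.1 + 1, j) ∈ cs s t ∧ j < c.2 := by
  induction t with
  | nil => simp [cs]
  | node a b iha ihb =>
    intro s c hc
    simp only [cs, Finset.mem_insert, Finset.mem_union] at hc
    rcases hc with rfl | hc | hc
    · cases a with
      | nil => left; simp [size]
      | node a1 a2 =>
        right
        refine ⟨s + 1 + 2 * size a1 + 1, by simp [cs], ?_⟩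
        simp [size]; omega
    · rcases iha _ _ hc with h | ⟨j, h, h'⟩
      · exact Or.inl h
      · exact Or.inr ⟨j, by simp [cs, h], h'⟩
    · rcases ihb _ _ hc with h | ⟨j, h, h'⟩
      · exact Or.inl h
      · exact Or.inr ⟨j, by simp [cs, h], h'⟩

theorem compat_word (t : DT) : ∀ pre post : List Bool,
    Compat (fun i => ((pre ++ (word t ++ post)).take i).count false) pre.length
      (pre.count false) t := by
  induction t with
  | nil => simp [Compat]
  | node a b iha ihb =>
    intro pre post
    refine ⟨by simp, ?_, ?_⟩
    · have := iha (pre ++ [true]) (false :: word b ++ post)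
      simpa [word] using this
    · have := ihb (pre ++ true :: (word a ++ [false])) post
      simp only [List.length_append, List.length_cons, List.length_nil, length_word,
        List.count_append, List.count_cons, count_word] at this
      convert this using 1
      · simp [word]
      · ring
      · simp; ring

/-! ### q-identities -/

theorem qint_ne (n : ℕ) : qint (n + 1) ≠ 0 := by
  have h : qint (n+1) = algebraMap (Polynomial ℚ) K
      (∑ i ∈ Finset.range (n+1), Polynomial.X ^ i) := by
    simp [qint, qq, RatFunc.algebraMap_X]
  rw [h]
  intro h0
  rw [map_eq_zero_iff _ (RatFunc.algebraMap_injective ℚ)] at h0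
  have := congrArg (Polynomial.eval 1) h0
  simp [Polynomial.eval_finsetSum] at this
  norm_cast at this

theorem qfact_succ (n : ℕ) : qfact (n+1) = qfact n * qint (n+1) := by
  simp [qfact, Finset.prod_range_succ]

theorem qfact_ne (n : ℕ) : qfact n ≠ 0 :=
  Finset.prod_ne_zero_iff.2 fun i _ => qint_ne i

theorem qint_add (a b : ℕ) : qint (a + b) = qint a + qq ^ a * qint b := by
  simp [qint, Finset.sum_range_add, Finset.mul_sum, pow_add]

theorem hook_ne (t : DT) : hook t ≠ 0 := by
  induction t with
  | nil => simp [hook]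
  | node a b iha ihb => simp [hook, iha, ihb, qint_ne]

theorem hockey (a d : ℕ) : ∑ e ∈ Finset.range (d+1),
    qq ^ (e * (a+1)) * (qfact (d - e + a) / qfact (d - e)) =
    qfact (d + a + 1) / (qfact d * qint (a+1)) := by
  induction d with
  | zero =>
    have := qint_ne a
    have h0 : qfact 0 = 1 := by simp [qfact]
    simp [h0, qfact_succ, this]
  | succ d ih =>
    rw [Finset.sum_range_succ']
    have : ∀ e ∈ Finset.range (d+1), qq ^ ((e+1) * (a+1)) *
      (qfact (d + 1 - (e+1) + a) / qfact (d + 1 - (e+1))) =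
      qq ^ (a+1) * (qq ^ (e * (a+1)) * (qfact (d - e + a) / qfact (d - e))) := by
      intro e _
      rw [Nat.add_sub_add_right]
      ring
    rw [Finset.sum_congr rfl this, ← Finset.mul_sum, ih]
    have e1 : d + 1 + a + 1 = (d + a + 1) + 1 := by ring
    have e2 : d + 1 + a = d + a + 1 := by ring
    have e3 : qint (d + a + 1 + 1) = qint (a+1) + qq^(a+1) * qint (d+1) := by
      rw [← qint_add]; congr 1; ring
    simp only [Nat.sub_zero, zero_mul, pow_zero, one_mul]
    rw [e1, e2, qfact_succ (d+a+1), e3, qfact_succ d]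
    have := qint_ne a
    have := qint_ne d
    have := qfact_ne d
    field_simp
    ring

/-! ### labellings -/

theorem FS_vanish (t : DT) : ∀ lo s m, ∀ f ∈ FS lo s m t, ∀ c ∉ cs s t, f c = 0 := by
  induction t with
  | nil => intro lo s m f hf; simp [FS] at hf; simp [hf]
  | node a b iha ihb =>
    intro lo s m f hf c hc
    simp only [FS, Finset.mem_image, Finset.mem_sigma, Finset.mem_product] at hf
    obtain ⟨⟨v, fa, fb⟩, ⟨-, h1, h2⟩, rfl⟩ := hf
    simp only [cs, Finset.mem_insert, Finset.mem_union, not_or] at hc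
    simp only at h1 h2
    have z1 := iha _ _ _ _ h1 _ hc.2.1
    have z2 := ihb _ _ _ _ h2 _ hc.2.2
    simp [glue, hc.1, z1, z2]

theorem node_disj (a b : DT) (s : ℕ) :
    (s, s + 2 * size a + 1) ∉ cs (s+1) a ∧ (s, s + 2 * size a + 1) ∉ cs (s + 2 * size a + 2) b ∧
    Disjoint (cs (s+1) a) (cs (s + 2 * size a + 2) b) := by
  refine ⟨fun h => ?_, fun h => ?_, Finset.disjoint_left.2 fun x h h' => ?_⟩
  · have := bnd _ _ _ h; simp at this
  · have := bnd _ _ _ h; simp at this; omega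
  · have := bnd _ _ _ h; have := bnd _ _ _ h'; omega

theorem sum_node {M : Type*} [AddCommMonoid M] (a b : DT) (s : ℕ) (f : ℕ × ℕ → M) :
    ∑ c ∈ cs s (node a b), f c = f (s, s + 2 * size a + 1) +
      (∑ c ∈ cs (s+1) a, f c + ∑ c ∈ cs (s + 2 * size a + 2) b, f c) := by
  obtain ⟨h1, h2, h3⟩ := node_disj a b s
  rw [cs, Finset.sum_insert (by simp [h1, h2]), Finset.sum_union h3]

theorem prod_node {M : Type*} [CommMonoid M] (a b : DT) (s : ℕ) (f : ℕ × ℕ → M) :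
    ∏ c ∈ cs s (node a b), f c = f (s, s + 2 * size a + 1) *
      ((∏ c ∈ cs (s+1) a, f c) * ∏ c ∈ cs (s + 2 * size a + 2) b, f c) := by
  obtain ⟨h1, h2, h3⟩ := node_disj a b s
  rw [cs, Finset.prod_insert (by simp [h1, h2]), Finset.prod_union h3]

theorem glue_root (c v fa fb) : glue c v fa fb c = v := by simp [glue]

theorem glue_left {lo v s m m' : ℕ} {a b : DT} {fa fb : ℕ × ℕ → ℕ}
    (hb : fb ∈ FS lo (s + 2 * size a + 2) m' b) {x : ℕ × ℕ} (hx : x ∈ cs (s+1) a) :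
    glue (s, s + 2 * size a + 1) v fa fb x = fa x := by
  obtain ⟨h1, h2, h3⟩ := node_disj a b s
  have : x ≠ (s, s + 2 * size a + 1) := by rintro rfl; exact h1 hx
  simp [glue, this, FS_vanish _ _ _ _ _ hb _ (Finset.disjoint_left.1 h3 hx)]

theorem glue_right {v' v s m : ℕ} {a b : DT} {fa fb : ℕ × ℕ → ℕ}
    (ha : fa ∈ FS v' (s+1) m a) {x : ℕ × ℕ} (hx : x ∈ cs (s + 2 * size a + 2) b) :
    glue (s, s + 2 * size a + 1) v fa fb x = fb x := by
  obtain ⟨h1, h2, h3⟩ := node_disj a b s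
  have : x ≠ (s, s + 2 * size a + 1) := by rintro rfl; exact h2 hx
  simp [glue, this, FS_vanish _ _ _ _ _ ha _ (Finset.disjoint_right.1 h3 hx)]

def W (lo s m : ℕ) (t : DT) : K := ∑ f ∈ FS lo s m t, qq ^ (∑ c ∈ cs s t, f c)

theorem W_node (lo s m : ℕ) (a b : DT) : W lo s m (node a b) =
    (∑ v ∈ Finset.Icc lo m, qq ^ v * W v (s+1) m a) *
      W lo (s + 2 * size a + 2) (m + size a + 1) b := by
  rw [W, FS, Finset.sum_image, Finset.sum_sigma, Finset.sum_mul]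
  · refine Finset.sum_congr rfl fun v _ => ?_
    rw [Finset.sum_product, W, W, mul_assoc, Finset.sum_mul_sum, Finset.mul_sum]
    refine Finset.sum_congr rfl fun fa ha => ?_
    rw [Finset.mul_sum]
    refine Finset.sum_congr rfl fun fb hb => ?_
    simp only
    rw [sum_node, glue_root, Finset.sum_congr rfl fun x hx => glue_left (m := m) hb hx,
      Finset.sum_congr rfl fun x hx => glue_right ha hx, pow_add, pow_add]
  · rintro ⟨v, fa, fb⟩ h ⟨v', fa', fb'⟩ h' heq
    simp only [Finset.coe_sigma, Set.mem_sigma_iff, Finset.mem_coe, Finset.mem_product] at h h'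
    obtain ⟨-, h1, h2⟩ := h
    obtain ⟨-, h1', h2'⟩ := h'
    simp only at heq h1 h2 h1' h2'
    have e0 : v = v' := by
      have := congrFun heq (s, s + 2 * size a + 1)
      rwa [glue_root, glue_root] at this
    subst e0
    have e1 : fa = fa' := by
      funext x
      by_cases hx : x ∈ cs (s+1) a
      · have := congrFun heq x
        rwa [glue_left (m := m) h2 hx, glue_left (m := m) h2' hx] at this
      · rw [FS_vanish _ _ _ _ _ h1 _ hx, FS_vanish _ _ _ _ _ h1' _ hx]
    have e2 : fb = fb' := by
      funext x
      by_cases hx : x ∈ cs (s + 2 * size a + 2) b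
      · have := congrFun heq x
        rwa [glue_right h1 hx, glue_right h1' hx] at this
      · rw [FS_vanish _ _ _ _ _ h2 _ hx, FS_vanish _ _ _ _ _ h2' _ hx]
    rw [e1, e2]

theorem W_eq (t : DT) : ∀ lo s d, W lo s (lo + d) t =
    qq ^ (lo * size t) * (qfact (d + size t) / qfact d) / hook t := by
  induction t with
  | nil => intro lo s d; simp [W, FS, cs, size, hook, qfact_ne]
  | node a b iha ihb =>
    intro lo s d
    have hb := ihb lo (s + 2 * size a + 2) (d + size a + 1)
    rw [← add_assoc, ← add_assoc] at hb
    have key : ∑ v ∈ Finset.Icc lo (lo + d), qq ^ v * W v (s+1) (lo + d) a =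
        qq ^ (lo * (size a + 1)) / hook a * (qfact (d + size a + 1) / (qfact d * qint (size a +1))) := by
      rw [← hockey, Finset.mul_sum, Finset.range_eq_Ico,
        show Finset.Icc lo (lo+d) = Finset.Ico (0 + lo) (d + 1 + lo) by ext; simp; omega,
        ← Finset.sum_Ico_add']
      refine Finset.sum_congr rfl fun e he => ?_
      have he' : e ≤ d := by simp at he; omega
      obtain ⟨k, rfl⟩ := Nat.exists_eq_add_of_le he'
      have := iha (e + lo) (s+1) k
      rw [show lo + (e + k) = e + lo + k by ring, this]
      simp only [Nat.add_sub_cancel_left]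
      ring
    rw [W_node, key, hb]
    have := hook_ne a
    have := hook_ne b
    have := qint_ne (size a)
    have := qfact_ne d
    have := qfact_ne (d + size a + 1)
    rw [size, hook, show d + (size a + size b + 1) = d + size a + 1 + size b by ring]
    field_simp
    ring

theorem mem_FS (κ : ℕ → ℕ) (t : DT) : ∀ lo s m, Compat κ s m t → ∀ f, f ∈ FS lo s m t ↔
    ((∀ c ∉ cs s t, f c = 0) ∧ (∀ c ∈ cs s t, ∀ c' ∈ cs s t, NestedIn c' c → f c ≤ f c') ∧
     ∀ c ∈ cs s t, lo ≤ f c ∧ f c ≤ κ c.1) := by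
  induction t with
  | nil =>
    intro lo s m _ f
    simp [FS, cs, funext_iff]
  | node a b iha ihb =>
    intro lo s m hκ f
    obtain ⟨hm, hκa, hκb⟩ := hκ
    constructor
    · intro hf
      refine ⟨FS_vanish _ _ _ _ _ hf, ?_⟩
      simp only [FS, Finset.mem_image, Finset.mem_sigma, Finset.mem_product] at hf
      obtain ⟨⟨v, fa, fb⟩, ⟨hv, h1, h2⟩, rfl⟩ := hf
      simp only at hv h1 h2 ⊢
      have gl := fun x hx => glue_left (v := v) (fa := fa) (m := m) (x := x) h2 hx
      have gr := fun x hx => glue_right (v := v) (fb := fb) (b := b) (x := x) h1 hx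
      have g0 := glue_root (s, s + 2 * size a + 1) v fa fb
      obtain ⟨-, ma, ba⟩ := (iha _ _ _ hκa _).1 h1
      obtain ⟨-, mb, bb⟩ := (ihb _ _ _ hκb _).1 h2
      rw [Finset.mem_Icc] at hv
      simp only [cs, Finset.mem_insert, Finset.mem_union]
      constructor
      · rintro c (rfl | hc | hc) c' (rfl | hc' | hc') hn
        · exact le_rfl
        · rw [g0, gl _ hc']; exact (ba _ hc').1
        · have := bnd _ _ _ hc'; simp [NestedIn] at hn; omega
        · have := bnd _ _ _ hc; simp [NestedIn] at hn; omega
        · rw [gl _ hc, gl _ hc']; exact ma _ hc _ hc' hn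
        · have := bnd _ _ _ hc; have := bnd _ _ _ hc'; simp [NestedIn] at hn; omega
        · have := bnd _ _ _ hc; simp [NestedIn] at hn; omega
        · have := bnd _ _ _ hc; have := bnd _ _ _ hc'; simp [NestedIn] at hn; omega
        · rw [gr _ hc, gr _ hc']; exact mb _ hc _ hc' hn
      · rintro c (rfl | hc | hc)
        · rw [g0]; simp only [hm]; exact hv
        · rw [gl _ hc]; have := ba _ hc; omega
        · rw [gr _ hc]; exact bb _ hc
    · rintro ⟨hz, hmono, hb⟩
      obtain ⟨d1, d2, d3⟩ := node_disj a b s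
      simp only [FS, Finset.mem_image, Finset.mem_sigma, Finset.mem_product]
      have memA : ∀ x ∈ cs (s+1) a, x ∈ cs s (node a b) := fun x hx => by simp [cs, hx]
      have memB : ∀ x ∈ cs (s + 2 * size a + 2) b, x ∈ cs s (node a b) :=
        fun x hx => by simp [cs, hx]
      have mem0 : (s, s + 2 * size a + 1) ∈ cs s (node a b) := by simp [cs]
      refine ⟨⟨f (s, s + 2 * size a + 1), fun x => if x ∈ cs (s+1) a then f x else 0,
        fun x => if x ∈ cs (s + 2 * size a + 2) b then f x else 0⟩, ⟨?_, ?_, ?_⟩, ?_⟩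
      · have := hb _ mem0; rw [Finset.mem_Icc]; simpa [hm] using this
      · refine (iha _ _ _ hκa _).2 ⟨fun c hc => by simp [hc], fun c hc c' hc' hn => ?_,
          fun c hc => ?_⟩
        · simp only [hc, hc', if_true]; exact hmono _ (memA _ hc) _ (memA _ hc') hn
        · simp only [hc, if_true]
          refine ⟨hmono _ mem0 _ (memA _ hc) ?_, (hb _ (memA _ hc)).2⟩
          have := bnd _ _ _ hc; simp only [NestedIn]; omega
      · refine (ihb _ _ _ hκb _).2 ⟨fun c hc => by simp [hc], fun c hc c' hc' hn => ?_,
          fun c hc => ?_⟩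
        · simp only [hc, hc', if_true]; exact hmono _ (memB _ hc) _ (memB _ hc') hn
        · simp only [hc, if_true]; exact hb _ (memB _ hc)
      · funext x
        simp only [glue]
        by_cases h0 : x = (s, s + 2 * size a + 1)
        · simp [h0]
        by_cases h1 : x ∈ cs (s+1) a
        · simp [h0, h1, Finset.disjoint_left.1 d3 h1]
        by_cases h2 : x ∈ cs (s + 2 * size a + 2) b
        · simp [h0, h1, h2]
        · simp only [h0, h1, h2, if_false]
          exact (hz x (by simp [cs, h0, h1, h2])).symm

/-! ### the product side -/

def glen (S : Finset (ℕ × ℕ)) (c : ℕ × ℕ) : ℕ := 1 + (S.filter fun c' => NestedIn c' c).card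

def gch (S : Finset (ℕ × ℕ)) (c : ℕ × ℕ) : Finset (ℕ × ℕ) :=
  S.filter fun c' => NestedIn c' c ∧ ∀ c'' ∈ S, ¬ (NestedIn c' c'' ∧ NestedIn c'' c)

def groot (S : Finset (ℕ × ℕ)) : Finset (ℕ × ℕ) :=
  S.filter fun c' => ∀ c'' ∈ S, ¬ NestedIn c' c''

def gmul (S s : Finset (ℕ × ℕ)) : K :=
  qfact (∑ c ∈ s, glen S c) / ∏ c ∈ s, qfact (glen S c)

theorem card_cs (t : DT) : ∀ s, (cs s t).card = size t := by
  induction t with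
  | nil => simp [cs, size]
  | node a b iha ihb =>
    intro s
    rw [Finset.card_eq_sum_ones, sum_node, ← Finset.card_eq_sum_ones, ← Finset.card_eq_sum_ones,
      iha, ihb, size]; ring

section
variable (a b : DT) (s : ℕ)

theorem filt (P : ℕ × ℕ → Prop) (T : Finset (ℕ × ℕ)) (hT : T ⊆ cs s (node a b))
    (h : ∀ x ∈ cs s (node a b), P x → x ∈ T) :
    (cs s (node a b)).filter P = T.filter P := by
  ext x; simp only [Finset.mem_filter]
  exact ⟨fun ⟨h1, h2⟩ => ⟨h x h1 h2, h2⟩, fun ⟨h1, h2⟩ => ⟨hT h1, h2⟩⟩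

theorem subA : cs (s+1) a ⊆ cs s (node a b) := fun x hx => by simp [cs, hx]
theorem subB : cs (s + 2 * size a + 2) b ⊆ cs s (node a b) := fun x hx => by simp [cs, hx]

theorem nestA {x c : ℕ × ℕ} (hx : x ∈ cs s (node a b)) (hc : c ∈ cs (s+1) a)
    (hn : NestedIn x c) : x ∈ cs (s+1) a := by
  simp only [cs, Finset.mem_insert, Finset.mem_union] at hx
  have := bnd _ _ _ hc
  rcases hx with rfl | hx | hx
  · simp [NestedIn] at hn; omega
  · exact hx
  · have := bnd _ _ _ hx; simp [NestedIn] at hn; omega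

theorem nestB {x c : ℕ × ℕ} (hx : x ∈ cs s (node a b)) (hc : c ∈ cs (s + 2 * size a + 2) b)
    (hn : NestedIn x c ∨ NestedIn c x) : x ∈ cs (s + 2 * size a + 2) b := by
  simp only [cs, Finset.mem_insert, Finset.mem_union] at hx
  have := bnd _ _ _ hc
  rcases hx with rfl | hx | hx
  · simp [NestedIn] at hn; omega
  · have := bnd _ _ _ hx; simp [NestedIn] at hn; omega
  · exact hx

theorem nest0 {x : ℕ × ℕ} (hx : x ∈ cs s (node a b)) :
    NestedIn x (s, s + 2 * size a + 1) ↔ x ∈ cs (s+1) a := by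
  simp only [cs, Finset.mem_insert, Finset.mem_union] at hx
  constructor
  · intro hn
    rcases hx with rfl | hx | hx
    · simp [NestedIn] at hn
    · exact hx
    · have := bnd _ _ _ hx; simp [NestedIn] at hn; omega
  · intro h
    have := bnd _ _ _ h; simp only [NestedIn]; omega

theorem gsub (S : Finset (ℕ × ℕ)) : groot S ⊆ S := Finset.filter_subset _ _
theorem csub (S : Finset (ℕ × ℕ)) (c) : gch S c ⊆ S := Finset.filter_subset _ _

theorem glenA {c} (hc : c ∈ cs (s+1) a) : glen (cs s (node a b)) c = glen (cs (s+1) a) c := by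
  rw [glen, glen, filt a b s _ _ (subA a b s) fun x hx hn => nestA a b s hx hc hn]

theorem glenB {c} (hc : c ∈ cs (s + 2 * size a + 2) b) :
    glen (cs s (node a b)) c = glen (cs (s + 2 * size a + 2) b) c := by
  rw [glen, glen, filt a b s _ _ (subB a b s) fun x hx hn => nestB a b s hx hc (Or.inl hn)]

theorem glen0 : glen (cs s (node a b)) (s, s + 2 * size a + 1) = size a + 1 := by
  rw [glen, filt a b s _ _ (subA a b s) fun x hx hn => (nest0 a b s hx).1 hn,
    Finset.filter_true_of_mem fun x hx => (nest0 a b s (subA a b s hx)).2 hx, card_cs]; ring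

theorem gchA {c} (hc : c ∈ cs (s+1) a) : gch (cs s (node a b)) c = gch (cs (s+1) a) c := by
  ext x
  simp only [gch, Finset.mem_filter]
  exact ⟨fun ⟨hx, hn, h⟩ => ⟨nestA a b s hx hc hn, hn, fun y hy => h y (subA a b s hy)⟩,
    fun ⟨hx, hn, h⟩ => ⟨subA a b s hx, hn, fun y hy hh => h y (nestA a b s hy hc hh.2) hh⟩⟩

theorem gchB {c} (hc : c ∈ cs (s + 2 * size a + 2) b) :
    gch (cs s (node a b)) c = gch (cs (s + 2 * size a + 2) b) c := by
  ext x
  simp only [gch, Finset.mem_filter]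
  exact ⟨fun ⟨hx, hn, h⟩ => ⟨nestB a b s hx hc (Or.inl hn), hn, fun y hy => h y (subB a b s hy)⟩,
    fun ⟨hx, hn, h⟩ => ⟨subB a b s hx, hn,
      fun y hy hh => h y (nestB a b s hy hc (Or.inl hh.2)) hh⟩⟩

theorem gch0 : gch (cs s (node a b)) (s, s + 2 * size a + 1) = groot (cs (s+1) a) := by
  ext x
  simp only [gch, groot, Finset.mem_filter]
  exact ⟨fun ⟨hx, hn, h⟩ => ⟨(nest0 a b s hx).1 hn, fun y hy hn' => h y (subA a b s hy)
      ⟨hn', (nest0 a b s (subA a b s hy)).2 hy⟩⟩,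
    fun ⟨hx, h⟩ => ⟨subA a b s hx, (nest0 a b s (subA a b s hx)).2 hx,
      fun y hy hh => h y ((nest0 a b s hy).1 hh.2) hh.1⟩⟩

theorem groot_node : groot (cs s (node a b)) =
    insert (s, s + 2 * size a + 1) (groot (cs (s + 2 * size a + 2) b)) := by
  ext x
  simp only [groot, Finset.mem_filter, Finset.mem_insert]
  constructor
  · rintro ⟨hx, h⟩
    have hx' := hx
    simp only [cs, Finset.mem_insert, Finset.mem_union] at hx'
    rcases hx' with hx' | hx' | hx'
    · exact Or.inl hx'
    · exact absurd ((nest0 a b s hx).2 hx') (h _ (by simp [cs]))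
    · exact Or.inr ⟨hx', fun y hy => h y (subB a b s hy)⟩
  · rintro (rfl | ⟨hx, h⟩)
    · refine ⟨by simp [cs], fun y hy hn => ?_⟩
      have := bnd _ _ _ hy
      simp [NestedIn] at hn; omega
    · exact ⟨subB a b s hx, fun y hy hn => h y (nestB a b s hy hx (Or.inr hn)) hn⟩

end

theorem root_sum (t : DT) : ∀ s, ∑ c ∈ groot (cs s t), glen (cs s t) c = size t := by
  induction t with
  | nil => simp [cs, groot, size]
  | node a b iha ihb =>
    intro s
    rw [groot_node, Finset.sum_insert, glen0, Finset.sum_congr rfl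
      fun c hc => glenB a b s (gsub _ hc), ihb, size]
    · ring
    · intro h; exact (node_disj a b s).2.1 (Finset.mem_of_mem_filter _ h)

theorem prod_eq (t : DT) : ∀ s, gmul (cs s t) (groot (cs s t)) *
    ∏ c ∈ cs s t, gmul (cs s t) (gch (cs s t) c) = qfact (size t) / hook t := by
  induction t with
  | nil => intro s; simp [cs, groot, size, gmul, hook, qfact]
  | node a b iha ihb =>
    intro s
    have ha := iha (s+1)
    have hb := ihb (s + 2 * size a + 2)
    have n0 : (s, s + 2 * size a + 1) ∉ groot (cs (s + 2 * size a + 2) b) :=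
      fun h => (node_disj a b s).2.1 (Finset.mem_of_mem_filter _ h)
    have cA : ∀ T ⊆ cs (s+1) a, gmul (cs s (node a b)) T = gmul (cs (s+1) a) T := by
      intro T hT
      rw [gmul, gmul, Finset.sum_congr rfl fun c hc => glenA a b s (hT hc),
        Finset.prod_congr rfl fun c hc => by rw [glenA a b s (hT hc)]]
    have cB : ∀ T ⊆ cs (s + 2 * size a + 2) b,
        gmul (cs s (node a b)) T = gmul (cs (s + 2 * size a + 2) b) T := by
      intro T hT
      rw [gmul, gmul, Finset.sum_congr rfl fun c hc => glenB a b s (hT hc),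
        Finset.prod_congr rfl fun c hc => by rw [glenB a b s (hT hc)]]
    have pA : ∏ c ∈ cs (s+1) a, gmul (cs s (node a b)) (gch (cs s (node a b)) c) =
        ∏ c ∈ cs (s+1) a, gmul (cs (s+1) a) (gch (cs (s+1) a) c) :=
      Finset.prod_congr rfl fun c hc => by rw [gchA a b s hc, cA _ (csub _ _)]
    have pB : ∏ c ∈ cs (s + 2 * size a + 2) b, gmul (cs s (node a b)) (gch (cs s (node a b)) c) =
        ∏ c ∈ cs (s + 2 * size a + 2) b,
          gmul (cs (s + 2 * size a + 2) b) (gch (cs (s + 2 * size a + 2) b) c) :=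
      Finset.prod_congr rfl fun c hc => by rw [gchB a b s hc, cB _ (csub _ _)]
    rw [prod_node, gch0, cA _ (gsub _), pA, pB, ← mul_assoc (gmul (cs (s+1) a) _), ha]
    rw [gmul, root_sum] at hb ⊢
    rw [groot_node, Finset.prod_insert n0, glen0, Finset.prod_congr rfl
      fun c hc => by rw [glenB a b s (gsub _ hc)]]
    have q1 := qfact_ne (size b)
    have q2 : ∏ c ∈ groot (cs (s + 2 * size a + 2) b),
      qfact (glen (cs (s + 2 * size a + 2) b) c) ≠ 0 :=
      Finset.prod_ne_zero_iff.2 fun _ _ => qfact_ne _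
    have q3 := qint_ne (size a)
    have q4 := qfact_ne (size a)
    have q5 := hook_ne a
    have q6 := hook_ne b
    generalize ∏ c ∈ groot (cs (s + 2 * size a + 2) b),
      qfact (glen (cs (s + 2 * size a + 2) b) c) = Q at *
    generalize ∏ c ∈ cs (s + 2 * size a + 2) b,
      gmul (cs (s + 2 * size a + 2) b) (gch (cs (s + 2 * size a + 2) b) c) = R at *
    rw [hook, qfact_succ (size a)]
    have hR : R = Q / hook b := by
      field_simp at hb ⊢
      exact hb
    rw [hR]
    field_simp

/-! ### words -/

theorem height_node (a b : DT) (k : ℕ) : heightAt (word (node a b)) k =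
    if k = 0 then 0 else if k ≤ 2 * size a + 1 then 1 + heightAt (word a) (k-1)
      else heightAt (word b) (k - (2 * size a + 2)) := by
  rcases k with _ | k
  · simp [heightAt]
  · simp only [word, heightAt, List.take_succ_cons, Nat.succ_ne_zero, if_false]
    split_ifs with h
    · have : k - (word a).length = 0 := by rw [length_word]; omega
      simp [List.take_append, this]; ring
    · obtain ⟨j, rfl⟩ : ∃ j, k = 2 * size a + 1 + j := ⟨k - (2 * size a + 1), by omega⟩
      have e1 : 2 * size a + 1 + j - (word a).length = j + 1 := by rw [length_word]; omega
      have e2 : 2 * size a + 1 + j + 1 - (2 * size a + 2) = j := by omega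
      have e3 : (word a).take (2 * size a + 1 + j) = word a :=
        List.take_of_length_le (by rw [length_word]; omega)
      simp only [List.take_append, e1, e2, e3, List.take_succ_cons]
      simp [count_word]; ring

theorem height_nonneg (t : DT) : ∀ k, 0 ≤ heightAt (word t) k := by
  induction t with
  | nil => simp [word, heightAt]
  | node a b iha ihb =>
    intro k
    rw [height_node]
    have := iha (k-1)
    split_ifs
    · exact le_rfl
    · omega
    · exact ihb _

theorem height_end (t : DT) : heightAt (word t) (2 * size t) = 0 := by
  rw [heightAt, List.take_of_length_le (by rw [length_word]), count_word, count_word]; simp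

theorem height_zero (l) : heightAt l 0 = 0 := by simp [heightAt]

theorem getD_node (a b : DT) (k : ℕ) (d : Bool) : (word (node a b)).getD k d =
    if k = 0 then true else if k ≤ 2 * size a then (word a).getD (k-1) d
      else if k = 2 * size a + 1 then false else (word b).getD (k - (2 * size a + 2)) d := by
  rcases k with _ | k
  · simp [word]
  · simp only [word, List.getD_cons_succ, Nat.succ_ne_zero, if_false]
    split_ifs with h h'
    · rw [List.getD_append _ _ _ _ (by rw [length_word]; omega)]; simp
    · rw [List.getD_append_right _ _ _ _ (by rw [length_word]; omega), length_word]
      have : k - 2 * size a = 0 := by omega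
      simp [this]
    · rw [List.getD_append_right _ _ _ _ (by rw [length_word]; omega), length_word]
      obtain ⟨j, rfl⟩ : ∃ j, k = 2 * size a + 1 + j := ⟨k - (2 * size a + 1), by omega⟩
      have e1 : 2 * size a + 1 + j - 2 * size a = j + 1 := by omega
      have e2 : 2 * size a + 1 + j + 1 - (2 * size a + 2) = j := by omega
      rw [e1, e2, List.getD_cons_succ]

theorem isChord_cs (t : DT) : ∀ s i j, IsChord (word t) i j ↔ (s + i, s + j) ∈ cs s t := by
  induction t with
  | nil => intro s i j; simp [cs, IsChord, word]
  | node a b iha ihb =>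
    intro s i j
    simp only [cs, Finset.mem_insert, Finset.mem_union, Prod.mk.injEq]
    have hlen : (word (node a b)).length = 2 * size a + 2 * size b + 2 := by
      rw [length_word, size]; ring
    constructor
    · rintro ⟨hij, hj, hU, hD, hh, hk⟩
      rw [hlen] at hj
      rcases Nat.eq_zero_or_pos i with rfl | hi
      · left
        refine ⟨rfl, ?_⟩
        rw [height_zero] at hh hk
        rcases lt_trichotomy j (2 * size a + 1) with h | h | h
        · rw [height_node, if_neg (by omega), if_pos (by omega)] at hh
          have := height_nonneg a (j+1-1); omega
        · omega
        · have := hk (2 * size a + 2) (by simp; omega)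
          rw [height_node, if_neg (by omega), if_neg (by omega), Nat.sub_self, height_zero] at this
          omega
      · right
        rcases lt_trichotomy i (2 * size a + 1) with h | h | h
        · left
          have hja : j ≤ 2 * size a := by
            by_contra hcon
            have := hk (2 * size a + 1) (by simp; omega)
            rw [height_node, if_neg (by omega), if_pos (by omega), height_node, if_neg (by omega),
              if_pos (by omega), Nat.add_sub_cancel, height_end] at this
            have := height_nonneg a (i-1); omega
          obtain ⟨i, rfl⟩ : ∃ i', i = i' + 1 := ⟨i - 1, by omega⟩
          obtain ⟨j, rfl⟩ : ∃ j', j = j' + 1 := ⟨j - 1, by omega⟩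
          have := (iha (s+1) i j).1 ⟨by omega, by rw [length_word]; omega, ?_, ?_, ?_, ?_⟩
          · convert this using 2 <;> ring
          · rw [getD_node, if_neg (by omega), if_pos (by omega)] at hU; simpa using hU
          · rw [getD_node, if_neg (by omega), if_pos (by omega)] at hD; simpa using hD
          · rw [height_node, if_neg (by omega), if_pos (by omega), height_node, if_neg (by omega),
              if_pos (by omega)] at hh
            simpa using hh
          · intro k hkm
            simp only [Finset.mem_Icc] at hkm
            have := hk (k+1) (by simp; omega)
            rw [height_node, if_neg (by omega), if_pos (by omega), height_node, if_neg (by omega),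
              if_pos (by omega)] at this
            simpa using this
        · rw [getD_node, if_neg (by omega), if_neg (by omega), if_pos h] at hU
          simp at hU
        · right
          obtain ⟨i, rfl⟩ : ∃ i', i = i' + (2 * size a + 2) := ⟨i - (2 * size a + 2), by omega⟩
          obtain ⟨j, rfl⟩ : ∃ j', j = j' + (2 * size a + 2) := ⟨j - (2 * size a + 2), by omega⟩
          have := (ihb (s + 2 * size a + 2) i j).1
            ⟨by omega, by rw [length_word]; omega, ?_, ?_, ?_, ?_⟩
          · convert this using 2 <;> ring
          · rw [getD_node, if_neg (by omega), if_neg (by omega), if_neg (by omega)] at hU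
            simpa using hU
          · rw [getD_node, if_neg (by omega), if_neg (by omega), if_neg (by omega)] at hD
            simpa using hD
          · rw [height_node, if_neg (by omega), if_neg (by omega), height_node, if_neg (by omega),
              if_neg (by omega), show j + (2 * size a + 2) + 1 - (2 * size a + 2) = j + 1 by omega,
              Nat.add_sub_cancel] at hh
            exact hh
          · intro k hkm
            simp only [Finset.mem_Icc] at hkm
            have := hk (k + (2 * size a + 2)) (by simp; omega)
            rw [height_node, if_neg (by omega), if_neg (by omega), height_node, if_neg (by omega),
              if_neg (by omega), Nat.add_sub_cancel, Nat.add_sub_cancel] at this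
            exact this
    · rintro (⟨h1, h2⟩ | h | h)
      · obtain rfl : i = 0 := by omega
        obtain rfl : j = 2 * size a + 1 := by omega
        refine ⟨by omega, by omega, by rw [getD_node, if_pos rfl], ?_, ?_, ?_⟩
        · rw [getD_node, if_neg (by omega), if_neg (by omega), if_pos rfl]
        · rw [height_node, if_neg (by omega), if_neg (by omega), Nat.sub_self, height_zero,
            height_zero]
        · intro k hk
          simp only [Finset.mem_Icc] at hk
          rw [height_zero, height_node, if_neg (by omega), if_pos (by omega)]
          have := height_nonneg a (k-1); omega
      · have hb := bnd _ _ _ h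
        simp only at hb
        obtain ⟨i, rfl⟩ : ∃ i', i = i' + 1 := ⟨i - 1, by omega⟩
        obtain ⟨j, rfl⟩ : ∃ j', j = j' + 1 := ⟨j - 1, by omega⟩
        obtain ⟨g1, g2, g3, g4, g5, g6⟩ := (iha (s+1) i j).2 (by convert h using 2 <;> ring)
        refine ⟨by omega, by omega, ?_, ?_, ?_, ?_⟩
        · rw [getD_node, if_neg (by omega), if_pos (by omega)]; simpa using g3
        · rw [getD_node, if_neg (by omega), if_pos (by omega)]; simpa using g4
        · rw [height_node, if_neg (by omega), if_pos (by omega), height_node, if_neg (by omega),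
            if_pos (by omega)]
          simpa using g5
        · intro k hk
          simp only [Finset.mem_Icc] at hk
          have := g6 (k-1) (by simp; omega)
          rw [height_node, if_neg (by omega), if_pos (by omega), height_node, if_neg (by omega),
              if_pos (by omega)]
          simpa using this
      · have hb := bnd _ _ _ h
        simp only at hb
        obtain ⟨i, rfl⟩ : ∃ i', i = i' + (2 * size a + 2) := ⟨i - (2 * size a + 2), by omega⟩
        obtain ⟨j, rfl⟩ : ∃ j', j = j' + (2 * size a + 2) := ⟨j - (2 * size a + 2), by omega⟩
        obtain ⟨g1, g2, g3, g4, g5, g6⟩ := (ihb (s + 2 * size a + 2) i j).2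
          (by convert h using 2 <;> ring)
        refine ⟨by omega, by omega, ?_, ?_, ?_, ?_⟩
        · rw [getD_node, if_neg (by omega), if_neg (by omega), if_neg (by omega)]
          simpa using g3
        · rw [getD_node, if_neg (by omega), if_neg (by omega), if_neg (by omega)]
          simpa using g4
        · rw [height_node, if_neg (by omega), if_neg (by omega), height_node, if_neg (by omega),
              if_neg (by omega), show j + (2 * size a + 2) + 1 - (2 * size a + 2) = j + 1 by omega,
              Nat.add_sub_cancel]
          exact g5
        · intro k hk
          simp only [Finset.mem_Icc] at hk
          have := g6 (k - (2 * size a + 2)) (by simp; omega)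
          rw [height_node, if_neg (by omega), if_neg (by omega), height_node, if_neg (by omega),
              if_neg (by omega), Nat.add_sub_cancel]
          exact this

theorem chords_word (t : DT) : chords (word t) = cs 0 t := by
  ext ⟨i, j⟩
  have := isChord_cs t 0 i j
  simp only [zero_add] at this
  rw [← this]
  simp only [chords, Finset.mem_filter, Finset.mem_product, Finset.mem_range, and_iff_right_iff_imp]
  exact fun h => ⟨h.1.trans h.2.1, h.2.1⟩

theorem LS_word (t : DT) : LSLabellings (word t) = ↑(FS 0 0 0 t) := by
  ext f
  have hc := compat_word t [] []
  simp only [List.nil_append, List.append_nil, List.length_nil, List.count_nil] at hc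
  rw [Finset.mem_coe, mem_FS _ t 0 0 0 hc]
  simp only [LSLabellings, Set.mem_ofPred_eq, chords_word]
  refine and_congr_right fun _ => and_congr_right fun hm => ⟨fun h => ?_, fun h c hc _ => (h c hc).2⟩
  suffices H : ∀ n, ∀ c ∈ cs 0 t, c.2 - c.1 ≤ n → f c ≤ ((word t).take c.1).count false from
    fun c hc => ⟨Nat.zero_le _, H _ c hc le_rfl⟩
  intro n
  induction n with
  | zero => intro c hc hn; have := bnd _ _ _ hc; omega
  | succ n ih =>
    intro c hc hn
    have hb := bnd _ _ _ hc
    rcases leaf t 0 c hc with hl | ⟨j, hj, hlt⟩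
    · exact h c hc fun c' _ hn' => by simp only [NestedIn] at hn'; omega
    · have hb' := bnd _ _ _ hj
      simp only at hb'
      have h1 := ih _ hj (by simp only; omega)
      have h2 := hm c hc _ hj (by simp only [NestedIn]; omega)
      refine h2.trans (h1.trans ?_)
      have hU : (word t).getD c.1 false = true :=
        ((isChord_cs t 0 c.1 c.2).2 (by simpa using hc)).2.2.1
      have hlt : c.1 < (word t).length := by rw [length_word]; omega
      rw [List.getD_eq_getElem _ _ hlt] at hU
      simp [List.take_succ_eq_append_getElem hlt, hU]

theorem main (t : DT) : PLSK (word t) = qmultiOver (word t) (rootChildren (word t)) *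
    ∏ c ∈ chords (word t), qmultiOver (word t) (childrenOf (word t) c) := by
  have h := prod_eq t 0
  rw [← chords_word] at h
  refine Eq.trans ?_ h.symm
  rw [PLSK, LS_word, finsum_mem_coe_finset, chords_word]
  have := W_eq t 0 0 0
  simpa [W, qfact] using this

open DyckStep in
theorem exists_word (l : List Bool) (hd : IsDyckWord l) : ∃ t, word t = l := by
  let g : Bool → DyckStep := fun b => if b then U else D
  have hg : Function.Injective g := by intro a b; cases a <;> cases b <;> simp [g]
  have key : ∀ n, ∀ p : DyckWord, p.toList.length ≤ n → ∃ t, (word t).map g = p.toList := by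
    intro n
    induction n with
    | zero =>
      intro p hp
      have : p.toList = [] := List.length_eq_zero_iff.1 (by omega)
      exact ⟨nil, by simp [word, this]⟩
    | succ n ih =>
      intro p hp
      by_cases h0 : p = 0
      · exact ⟨nil, by simp [h0, word]; rfl⟩
      have e := p.nest_insidePart_add_outsidePart h0
      have e' := congrArg DyckWord.toList e
      have e'' : U :: (p.insidePart.toList ++ D :: p.outsidePart.toList) = p.toList := by
        rw [← e']; simp [DyckWord.nest, HAdd.hAdd, Add.add]
      have hl := congrArg List.length e''
      simp at hl
      obtain ⟨a, ha⟩ := ih p.insidePart (by omega)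
      obtain ⟨b, hb⟩ := ih p.outsidePart (by omega)
      exact ⟨node a b, by rw [← e'']; simp [word, ha, hb, g]⟩
  have cU : ∀ m : List Bool, (m.map g).count U = m.count true :=
    fun m => List.count_map_of_injective m g hg true
  have cD : ∀ m : List Bool, (m.map g).count D = m.count false :=
    fun m => List.count_map_of_injective m g hg false
  obtain ⟨t, ht⟩ := key _ ⟨l.map g, by rw [cU, cD]; exact hd.1, fun i => by
    rw [← List.map_take, cU, cD]; exact hd.2 i⟩ le_rfl
  exact ⟨t, List.map_injective_iff.2 hg ht⟩

end DT


/-- Paper's Theorem `Dyck-fac`: the factorized product formula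
P_λ = ∏_v [l(c₁)+⋯+l(c_k); l(c₁),…,l(c_k)] over all nodes v of the chord forest
(the formal root together with every chord). -/
theorem stmt_11 (n : ℕ) (l : List Bool) (hd : IsDyckWord l) (hlen : l.length = 2 * n) :
    PLSK l =
      qmultiOver l (rootChildren l) * ∏ c ∈ chords l, qmultiOver l (childrenOf l c) := by
  obtain ⟨t, rfl⟩ := DT.exists_word l hd
  exact DT.main t
end
end
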